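/- Let t ≥ 3 be an integer, let G be a finite simple graph, and let Z = {e ∈ E(G) : p(e) < t−1}. Then equality holds in the bound N(G,K_t) ≤ (1/C(t,2)) · ∑_{e ∈ E(G)} C(p(e)−1, t−2) if and only if every connected component of the graph G∖Z obtained from G by deleting the edges of Z is a clique. -/

import Mathlib

open SimpleGraph Finset

/-- Number of copies of the complete graph `K_t` in `G`. -/
noncomputable def cliqueCount {V : Type*} (G : SimpleGraph V) (t : ℕ) : ℕ :=
  Set.ncard {s : Finset V | G.IsNClique t s}

/-- `maxPathLen G e` is the maximum length (number of edges) of a path in `G`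
containing the edge `e`. -/
noncomputable def maxPathLen {V : Type*} (G : SimpleGraph V) (e : Sym2 V) : ℕ :=
  sSup {n : ℕ | ∃ (u v : V) (w : G.Walk u v), w.IsPath ∧ e ∈ w.edges ∧ w.length = n}

section helpers
variable {V : Type*} [DecidableEq V] (G : SimpleGraph V) [DecidableRel G.Adj]

open Classical in
/-- number of `r`-cliques inside `S` -/
noncomputable def nc (S : Finset V) (r : ℕ) : ℕ :=
  ((S.powersetCard r).filter (fun K : Finset V => G.IsClique (K : Set V))).card

lemma nc_le_choose (S : Finset V) (r : ℕ) : nc G S r ≤ S.card.choose r := by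
  unfold nc
  refine (Finset.card_filter_le _ _).trans ?_
  rw [Finset.card_powersetCard]

open Classical in
lemma nc_mem (S : Finset V) (r : ℕ) (v : V) (hv : v ∈ S) :
    (((S.powersetCard (r+1)).filter (fun K : Finset V => G.IsClique (K : Set V))).filter
      (fun K => v ∈ K)).card = nc G (S.filter (G.Adj v)) r := by
  unfold nc
  refine Finset.card_nbij' (fun K => K.erase v) (fun K => insert v K) ?_ ?_ ?_ ?_
  · intro K hK
    simp only [coe_filter, mem_filter, mem_powersetCard, Set.mem_ofPred_eq] at hK ⊢
    obtain ⟨⟨⟨h1, h2⟩, h3⟩, h4⟩ := hK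
    refine ⟨⟨?_, ?_⟩, ?_⟩
    · intro x hx
      rw [Finset.mem_erase] at hx
      rw [Finset.mem_filter]
      exact ⟨h1 hx.2, h3 h4 hx.2 (Ne.symm hx.1)⟩
    · rw [Finset.card_erase_of_mem h4, h2]; rfl
    · exact h3.subset (by simp)
  · intro K hK
    simp only [coe_filter, mem_filter, mem_powersetCard, Set.mem_ofPred_eq] at hK ⊢
    obtain ⟨⟨h1, h2⟩, h3⟩ := hK
    have hvK : v ∉ K := fun h => by
      have := (Finset.mem_filter.1 (h1 h)).2
      exact G.loopless.irrefl v this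
    refine ⟨⟨⟨?_, ?_⟩, ?_⟩, by simp⟩
    · intro x hx
      rw [Finset.mem_insert] at hx
      rcases hx with rfl | hx
      · exact hv
      · exact (Finset.mem_filter.1 (h1 hx)).1
    · rw [Finset.card_insert_of_notMem hvK, h2]
    · rw [Finset.coe_insert]
      refine h3.insert ?_
      intro b hb _
      exact (Finset.mem_filter.1 (h1 hb)).2
  · intro K hK
    simp only [coe_filter, mem_filter, mem_powersetCard, Set.mem_ofPred_eq] at hK ⊢
    exact Finset.insert_erase hK.2
  · intro K hK
    simp only [coe_filter, mem_filter, mem_powersetCard, Set.mem_ofPred_eq] at hK ⊢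
    obtain ⟨⟨h1, h2⟩, h3⟩ := hK
    have hvK : v ∉ K := fun h => by
      have := (Finset.mem_filter.1 (h1 h)).2
      exact G.loopless.irrefl v this
    exact Finset.erase_insert hvK

lemma nc_split (S : Finset V) (r : ℕ) (v : V) (hv : v ∈ S) :
    nc G S (r+1) = nc G (S.erase v) (r+1) + nc G (S.filter (G.Adj v)) r := by
  classical
  rw [← nc_mem G S r v hv, add_comm (nc _ _ _)]
  unfold nc
  rw [← Finset.card_filter_add_card_filter_not
    (s := (S.powersetCard (r+1)).filter (fun K : Finset V => G.IsClique (K : Set V))) (fun K => v ∈ K)]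
  congr 1
  congr 1
  ext K
  simp only [mem_filter, mem_powersetCard, Finset.subset_erase]
  tauto

lemma nc_sum (S : Finset V) (r : ℕ) :
    (r+1) * nc G S (r+1) = ∑ v ∈ S, nc G (S.filter (G.Adj v)) r := by
  classical
  have h : ∑ v ∈ S, nc G (S.filter (G.Adj v)) r = ∑ v ∈ S,
    (((S.powersetCard (r+1)).filter (fun K : Finset V => G.IsClique (K : Set V))).filter
      (fun K => v ∈ K)).card := Finset.sum_congr rfl (fun v hv => (nc_mem G S r v hv).symm)
  rw [h]
  have := Finset.sum_card_bipartiteAbove_eq_sum_card_bipartiteBelow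
    (s := S) (t := (S.powersetCard (r+1)).filter (fun K : Finset V => G.IsClique (K : Set V)))
    (fun v K => v ∈ K)
  unfold Finset.bipartiteAbove Finset.bipartiteBelow at this
  rw [this]
  rw [Finset.sum_congr rfl (g := fun _ => r+1)]
  · simp [nc, mul_comm]
  · intro K hK
    simp only [mem_filter, mem_powersetCard] at hK
    rw [← hK.1.2]
    congr 1
    ext x
    simp only [mem_filter]
    exact ⟨fun h => h.2, fun h => ⟨hK.1.1 h, h⟩⟩

lemma nc_union (S T : Finset V) (r : ℕ)
    (h : ∀ x ∈ T, ∀ y ∈ S, y ∉ T → ¬ G.Adj x y) :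
    nc G S (r+1) ≤ nc G T (r+1) + nc G (S \ T) (r+1) := by
  classical
  unfold nc
  refine le_trans (Finset.card_le_card ?_) (Finset.card_union_le _ _)
  intro K hK
  simp only [mem_filter, mem_powersetCard, mem_union] at hK ⊢
  obtain ⟨⟨h1, h2⟩, h3⟩ := hK
  by_cases hx : ∃ x ∈ K, x ∈ T
  · left
    obtain ⟨x, hxK, hxT⟩ := hx
    refine ⟨⟨?_, h2⟩, h3⟩
    intro y hy
    by_contra hyT
    refine h x hxT y (h1 hy) hyT (h3 hxK hy ?_)
    rintro rfl
    exact hyT hxT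
  · right
    push Not at hx
    exact ⟨⟨fun y hy => Finset.mem_sdiff.2 ⟨h1 hy, hx y hy⟩, h2⟩, h3⟩

lemma clique_of_nc (T : Finset V) (r : ℕ) (hr : 1 ≤ r) (hT : r + 1 ≤ T.card)
    (h : nc G T (r+1) = T.card.choose (r+1)) : G.IsClique (T : Set V) := by
  classical
  unfold nc at h
  rw [← Finset.card_powersetCard] at h
  have h2 := Finset.filter_card_eq h
  intro x hx y hy hxy
  have hsub : ({x, y} : Finset V) ⊆ T := by
    intro z hz
    simp only [Finset.mem_insert, Finset.mem_singleton] at hz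
    rcases hz with rfl | rfl
    · exact hx
    · exact hy
  obtain ⟨K, hK1, hK2, hK3⟩ := Finset.exists_subsuperset_card_eq hsub
    (n := r+1) (by rw [Finset.card_pair hxy]; omega) hT
  exact h2 K (Finset.mem_powersetCard.2 ⟨hK2, hK3⟩) (hK1 (by simp)) (hK1 (by simp)) hxy

/-- list paths within `S` -/
def PIn (S : Finset V) (l : List V) : Prop :=
  l.Nodup ∧ l.IsChain G.Adj ∧ ∀ x ∈ l, x ∈ S

/-- longest path length through `u` within `S` -/
noncomputable def pl (S : Finset V) (u : V) : ℕ :=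
  sSup {n : ℕ | ∃ l, PIn G S l ∧ u ∈ l ∧ l.length = n + 1}

lemma PIn.length_le {S : Finset V} {l : List V} (h : PIn G S l) : l.length ≤ S.card := by
  rw [← List.toFinset_card_of_nodup h.1]
  exact Finset.card_le_card (fun x hx => h.2.2 x (List.mem_toFinset.1 hx))

lemma pl_bdd (S : Finset V) (u : V) :
    BddAbove {n : ℕ | ∃ l, PIn G S l ∧ u ∈ l ∧ l.length = n + 1} := by
  refine ⟨S.card, ?_⟩
  rintro n ⟨l, h1, h2, h3⟩
  have := PIn.length_le G h1
  omega

lemma le_pl {S : Finset V} {l : List V} (h : PIn G S l) {u : V} (hu : u ∈ l) :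
    l.length ≤ pl G S u + 1 := by
  have h0 : 0 < l.length := List.length_pos_of_mem hu
  have := le_csSup (pl_bdd G S u) (a := l.length - 1) ⟨l, h, hu, by omega⟩
  unfold pl
  omega

lemma exists_pl {S : Finset V} {u : V} (hu : u ∈ S) :
    ∃ l, PIn G S l ∧ u ∈ l ∧ l.length = pl G S u + 1 := by
  have : pl G S u ∈ {n : ℕ | ∃ l, PIn G S l ∧ u ∈ l ∧ l.length = n + 1} := by
    refine Nat.sSup_mem ⟨0, [u], ⟨by simp, by simp, by simpa using hu⟩, by simp, by simp⟩
      (pl_bdd G S u)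
  exact this

lemma pl_mono {S T : Finset V} (h : S ⊆ T) {u : V} (hu : u ∈ S) : pl G S u ≤ pl G T u := by
  obtain ⟨l, h1, h2, h3⟩ := exists_pl G hu
  have := le_pl G (S := T) ⟨h1.1, h1.2.1, fun x hx => h (h1.2.2 x hx)⟩ h2
  omega

lemma chain_of_clique {l : List V} (hn : l.Nodup) (h : ∀ x ∈ l, ∀ y ∈ l, x ≠ y → G.Adj x y) :
    l.IsChain G.Adj := by
  apply List.Pairwise.isChain
  exact List.Pairwise.imp_of_mem (fun ha hb hab => h _ ha _ hb hab) hn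

lemma two_pow_choose (r d k : ℕ) (h : 2 * d ≤ k) : 2 ^ r * d.choose r ≤ k.choose r := by
  have key : 2 ^ r * d.descFactorial r ≤ k.descFactorial r := by
    induction r with
    | zero => simp
    | succ r ih =>
      rw [Nat.descFactorial_succ, Nat.descFactorial_succ, pow_succ]
      calc 2 ^ r * 2 * ((d - r) * d.descFactorial r)
          = (2 * (d - r)) * (2 ^ r * d.descFactorial r) := by ring
        _ ≤ (k - r) * k.descFactorial r := Nat.mul_le_mul (by omega) ih
  rw [Nat.descFactorial_eq_factorial_mul_choose, Nat.descFactorial_eq_factorial_mul_choose] at key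
  have : r.factorial * (2 ^ r * d.choose r) ≤ r.factorial * k.choose r := by linarith
  exact Nat.le_of_mul_le_mul_left this (Nat.factorial_pos r)

lemma succ_mul_choose (r d k : ℕ) (h : 2 * d ≤ k) : (r + 1) * d.choose r ≤ k.choose r :=
  (Nat.mul_le_mul_right _ (Nat.lt_two_pow_self)).trans (two_pow_choose r d k h)

lemma succ_mul_choose_lt (r d k : ℕ) (h : 2 * d ≤ k) (hr : 2 ≤ r) (hk : r ≤ k) :
    (r + 1) * d.choose r < k.choose r := by
  rcases Nat.eq_zero_or_pos (d.choose r) with h0 | h0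
  · rw [h0]; simpa using Nat.choose_pos hk
  · refine lt_of_lt_of_le (Nat.mul_lt_mul_of_pos_right ?_ h0) (two_pow_choose r d k h)
    clear h hk h0
    induction r, hr using Nat.le_induction with
    | base => norm_num
    | succ n hn ih => rw [pow_succ]; omega

lemma choose_inj_of {p q r : ℕ} (hr : 1 ≤ r) (hpq : p ≤ q) (hq : r ≤ q)
    (h : p.choose r = q.choose r) : p = q := by
  by_contra hne
  have hlt : p + 1 ≤ q := by omega
  obtain ⟨s, rfl⟩ : ∃ s, r = s + 1 := ⟨r - 1, by omega⟩
  have h1 : (q-1).choose (s+1) < q.choose (s+1) := by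
    obtain ⟨q', rfl⟩ : ∃ q', q = q' + 1 := ⟨q - 1, by omega⟩
    rw [Nat.choose_succ_succ]
    have : 0 < q'.choose s := Nat.choose_pos (by omega)
    simp; omega
  have h2 : p.choose (s+1) ≤ (q-1).choose (s+1) := Nat.choose_le_choose _ (by omega)
  omega

lemma cons_zero_tail (m : List V) (h : 0 < m.length) : m[0] :: m.tail = m := by
  cases m with
  | nil => simp at h
  | cons a b => simp

lemma cross (S : Finset V) (k : ℕ) (l : List V) (hl : PIn G S l) (hlen : l.length = k + 1)
    (hmax : ∀ l', PIn G S l' → l'.length ≤ k + 1) :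
    (∃ v l2, PIn G S (v :: l2) ∧ (v :: l2).length = k + 1 ∧ 2 * (S.filter (G.Adj v)).card ≤ k) ∨
    (∃ c, PIn G S c ∧ c.length = k + 1 ∧ ∀ x ∈ c.getLast?, ∀ y ∈ c.head?, G.Adj x y) := by
  obtain ⟨hnd, hch, hS⟩ := hl
  have h0 : 0 < l.length := by omega
  have hk : k < l.length := by omega
  set v0 := l[0] with hv0
  set f : ℕ → V := fun i => l.getD i v0 with hf
  have hrev : PIn G S l.reverse := by
    refine ⟨List.nodup_reverse.2 hnd, List.isChain_reverse.2 ?_, by simpa using hS⟩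
    exact hch.imp (fun a b h => h.symm)
  -- neighbours of the start of a longest path are on the path
  have hext : ∀ (m : List V) (hm : PIn G S m) (hml : m.length = k + 1) (y : V), y ∈ S →
      (∀ x ∈ m.head?, G.Adj y x) → y ∈ m := by
    intro m hm hml y hy hyx
    by_contra hym
    have := hmax (y :: m) ⟨List.nodup_cons.2 ⟨hym, hm.1⟩,
      List.isChain_cons.2 ⟨hyx, hm.2.1⟩, by
        intro x hx
        rcases List.mem_cons.1 hx with rfl | hx
        · exact hy
        · exact hm.2.2 x hx⟩
    simp at this
    omega
  set A := (Finset.range k).filter (fun i => G.Adj (f 0) (f (i+1))) with hA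
  set B := (Finset.range k).filter (fun i => G.Adj (f k) (f i)) with hB
  have hfi : ∀ i (hi : i < l.length), f i = l[i] := by
    intro i hi
    simp [hf, hi]
  have hAc : (S.filter (G.Adj (f 0))).card ≤ A.card := by
    refine le_trans (Finset.card_le_card ?_) (Finset.card_image_le (s := A) (f := fun i => f (i+1)))
    intro y hy
    obtain ⟨hy1, hy2⟩ := Finset.mem_filter.1 hy
    have hyl : y ∈ l := hext l ⟨hnd, hch, hS⟩ hlen y hy1 (by
      intro x hx
      rw [List.head?_eq_getElem?, List.getElem?_eq_getElem h0] at hx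
      simp at hx
      rw [← hx, ← hfi 0 h0]
      exact hy2.symm)
    obtain ⟨i, hi, rfl⟩ := List.mem_iff_getElem.1 hyl
    have hi0 : i ≠ 0 := by
      rintro rfl
      rw [hfi 0 h0] at hy2
      exact G.loopless.irrefl _ hy2
    refine Finset.mem_image.2 ⟨i - 1, ?_, ?_⟩
    · rw [hA, Finset.mem_filter, Finset.mem_range]
      refine ⟨by omega, ?_⟩
      rw [show i - 1 + 1 = i by omega, hfi i hi]
      exact hy2
    · show f (i - 1 + 1) = _
      rw [show i - 1 + 1 = i by omega, hfi i hi]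
  have hBc : (S.filter (G.Adj (f k))).card ≤ B.card := by
    refine le_trans (Finset.card_le_card ?_) (Finset.card_image_le (s := B) (f := fun i => f i))
    intro y hy
    obtain ⟨hy1, hy2⟩ := Finset.mem_filter.1 hy
    have hyl : y ∈ l.reverse := hext l.reverse hrev (by simpa using hlen) y hy1 (by
      intro x hx
      rw [List.head?_reverse, List.getLast?_eq_getElem?, hlen] at hx
      simp [hk] at hx
      rw [← hx, ← hfi k hk]
      exact hy2.symm)
    rw [List.mem_reverse] at hyl
    obtain ⟨i, hi, rfl⟩ := List.mem_iff_getElem.1 hyl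
    have hi0 : i ≠ k := by
      rintro rfl
      rw [hfi i hk] at hy2
      exact G.loopless.irrefl _ hy2
    refine Finset.mem_image.2 ⟨i, ?_, hfi i hi⟩
    rw [hB, Finset.mem_filter, Finset.mem_range]
    refine ⟨by omega, ?_⟩
    rw [hfi i hi]
    exact hy2
  by_cases hAB : A.card + B.card ≤ k
  · left
    rcases Nat.le_total A.card B.card with h | h
    · refine ⟨f 0, l.tail, ?_, ?_, by omega⟩
      · rw [hfi 0 h0]
        have : l[0] :: l.tail = l := cons_zero_tail _ h0
        rw [this]
        exact ⟨hnd, hch, hS⟩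
      · simp; omega
    · refine ⟨f k, l.reverse.tail, ?_, ?_, by omega⟩
      · have : f k :: l.reverse.tail = l.reverse := by
          rw [hfi k hk]
          have h1 : 0 < l.reverse.length := by simpa using h0
          have h2 : l.reverse[0] = l[k] := by simp [hlen]
          rw [← h2]
          exact cons_zero_tail _ h1
        rw [this]
        exact hrev
      · simp; omega
  · right
    have : (A ∩ B).Nonempty := by
      rw [← Finset.card_pos]
      have h1 := Finset.card_union_add_card_inter A B
      have h2 : (A ∪ B).card ≤ k := by
        have := Finset.card_le_card (s := A ∪ B) (t := Finset.range k)
          (Finset.union_subset (Finset.filter_subset _ _) (Finset.filter_subset _ _))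
        simpa using this
      omega
    obtain ⟨i, hi⟩ := this
    simp only [hA, hB, Finset.mem_inter, Finset.mem_filter, Finset.mem_range] at hi
    obtain ⟨⟨hik, ha⟩, -, hb⟩ := hi
    rw [hfi 0 h0, hfi (i+1) (by omega)] at ha
    rw [hfi k hk, hfi i (by omega)] at hb
    have hperm : (l.take (i+1) ++ (l.drop (i+1)).reverse).Perm l := by
      conv_rhs => rw [← List.take_append_drop (i+1) l]
      exact List.Perm.append_left _ (List.reverse_perm _)
    refine ⟨l.take (i+1) ++ (l.drop (i+1)).reverse, ⟨?_, ?_, ?_⟩, ?_, ?_⟩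
    · exact hperm.nodup_iff.2 hnd
    · rw [List.isChain_append]
      refine ⟨hch.take _, List.isChain_reverse.2 ((hch.drop _).imp (fun a b h => h.symm)), ?_⟩
      intro x hx y hy
      have hx' : x = l[i] := by
        rw [List.getLast?_eq_getElem?] at hx
        have : min (i+1) l.length - 1 = i := by omega
        simp [this] at hx
        grind
      have hy' : y = l[k] := by
        rw [List.head?_reverse, List.getLast?_eq_getElem?] at hy
        simp at hy
        grind
      rw [hx', hy']
      exact hb.symm
    · intro x hx
      exact hS x (hperm.mem_iff.1 hx)
    · rw [hperm.length_eq, hlen]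
    · intro x hx y hy
      have hd : l.drop (i+1) = l[i+1] :: l.drop (i+2) := by
        rw [List.drop_eq_getElem_cons (by omega : i + 1 < l.length)]
      have ht : l.take (i+1) = l[0] :: l.tail.take i := by
        conv_lhs => rw [← cons_zero_tail l h0]
        rw [List.take_succ_cons]
      rw [hd, List.reverse_cons, ← List.append_assoc, List.getLast?_concat] at hx
      rw [ht, List.cons_append, List.head?_cons] at hy
      simp only [Option.mem_def, Option.some.injEq] at hx hy
      rw [← hx, ← hy]
      exact ha.symm
end helpers

section mainlemma
variable {V : Type*} [DecidableEq V] (G : SimpleGraph V) [DecidableRel G.Adj]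

lemma closed_no_edge (S : Finset V) (k : ℕ) (c : List V) (hc : PIn G S c) (hlen : c.length = k + 1)
    (hmax : ∀ l', PIn G S l' → l'.length ≤ k + 1)
    (hcl : ∀ x ∈ c.getLast?, ∀ y ∈ c.head?, G.Adj x y) :
    ∀ x ∈ c.toFinset, ∀ y ∈ S, y ∉ c.toFinset → ¬ G.Adj x y := by
  intro x hx y hy hyc hxy
  rw [List.mem_toFinset] at hx hyc
  obtain ⟨c1, c2, rfl⟩ := List.append_of_mem hx
  obtain ⟨hnd, hch, hS⟩ := hc
  have hperm : (x :: c2 ++ c1).Perm (c1 ++ x :: c2) := List.perm_append_comm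
  have hP : PIn G S (y :: (x :: c2 ++ c1)) := by
    refine ⟨List.nodup_cons.2 ⟨fun h => hyc (hperm.mem_iff.1 h), hperm.nodup_iff.2 hnd⟩, ?_, ?_⟩
    · rw [List.isChain_cons]
      refine ⟨by simpa using hxy.symm, ?_⟩
      rw [List.isChain_append] at hch ⊢
      refine ⟨hch.2.1, hch.1, ?_⟩
      intro a ha b hb
      refine hcl a ?_ b ?_
      · rw [List.getLast?_append]
        rw [Option.mem_def] at ha
        simp [ha]
      · rw [List.head?_append]
        rw [Option.mem_def] at hb
        simp [hb]
    · intro z hz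
      rcases List.mem_cons.1 hz with rfl | hz
      · exact hy
      · exact hS z (hperm.mem_iff.1 hz)
  have h1 := hmax _ hP
  have h2 := hperm.length_eq
  rw [List.length_cons] at h1
  omega

theorem main_local (r : ℕ) (hr : 1 ≤ r) (S : Finset V) :
    (r + 1) * nc G S (r + 1) ≤ ∑ u ∈ S, (pl G S u).choose r ∧
    ((r + 1) * nc G S (r + 1) = ∑ u ∈ S, (pl G S u).choose r →
      ∀ u ∈ S, r ≤ pl G S u → ∃ K ⊆ S, G.IsClique (K : Set V) ∧ u ∈ K ∧ K.card = pl G S u + 1) := by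
  induction S using Finset.strongInduction with
  | H S ih =>
  rcases S.eq_empty_or_nonempty with rfl | hne
  · refine ⟨?_, by simp⟩
    have := nc_le_choose G (∅ : Finset V) (r+1)
    simp at this
    simp [this]
  obtain ⟨w, hw, hwmax⟩ := Finset.exists_max_image S (pl G S) hne
  obtain ⟨l, hl, hwl, hlen⟩ := exists_pl G hw
  set k := pl G S w with hkdef
  have hmax : ∀ l', PIn G S l' → l'.length ≤ k + 1 := by
    intro l' hl'
    cases l' with
    | nil => simp
    | cons a b =>
      have h1 := le_pl G hl' (u := a) (by simp)
      have h2 := hwmax a (hl'.2.2 a (by simp))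
      omega
  have hplk : ∀ l', PIn G S l' → l'.length = k + 1 → ∀ x ∈ l', pl G S x = k := by
    intro l' hl' hlen' x hx
    have h1 := le_pl G hl' hx
    have h2 := hwmax x (hl'.2.2 x hx)
    omega
  rcases cross G S k l hl hlen hmax with ⟨v, l2, hv, hvlen, hdeg⟩ | ⟨c, hc, hclen, hcl⟩
  · have hvS : v ∈ S := hv.2.2 v (by simp)
    have hpv : pl G S v = k := hplk _ hv hvlen v (by simp)
    obtain ⟨ih1, ih2⟩ := ih (S.erase v) (Finset.erase_ssubset hvS)
    have hmono : ∀ u ∈ S.erase v, (pl G (S.erase v) u).choose r ≤ (pl G S u).choose r :=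
      fun u hu => Nat.choose_le_choose _ (pl_mono G (Finset.erase_subset _ _) hu)
    have hsum := Finset.sum_le_sum hmono
    have hS : ∑ u ∈ S, (pl G S u).choose r = ∑ u ∈ S.erase v, (pl G S u).choose r + k.choose r := by
      rw [← Finset.sum_erase_add _ _ hvS, hpv]
    have hloc : (r+1) * nc G (S.filter (G.Adj v)) r ≤ (r+1) * (S.filter (G.Adj v)).card.choose r :=
      Nat.mul_le_mul_left _ (nc_le_choose G _ r)
    have hbin := succ_mul_choose r _ k hdeg
    rw [nc_split G S r v hvS, hS, mul_add]
    refine ⟨by omega, ?_⟩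
    intro heq u hu hur
    exfalso
    have e1 : (r+1) * nc G (S.erase v) (r+1) = ∑ u ∈ S.erase v, (pl G (S.erase v) u).choose r := by
      omega
    have e2 : ∑ u ∈ S.erase v, (pl G (S.erase v) u).choose r
      = ∑ u ∈ S.erase v, (pl G S u).choose r := by omega
    have e3 : (r+1) * (S.filter (G.Adj v)).card.choose r = k.choose r := by omega
    have hrk : r ≤ k := hur.trans (hwmax u hu)
    have hr1 : r = 1 := by
      by_contra hr1
      have := succ_mul_choose_lt r _ k hdeg (by omega) hrk
      omega
    subst hr1
    cases l2 with
    | nil => simp at hvlen; omega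
    | cons v1 l3 =>
      have hv1 : v1 ∈ S.erase v := by
        rw [Finset.mem_erase]
        refine ⟨?_, hv.2.2 v1 (by simp)⟩
        rintro rfl
        have := hv.1
        simp at this
      have hadj : G.Adj v v1 := by
        have := hv.2.1
        rw [List.isChain_cons] at this
        exact this.1 v1 (by simp)
      have e4 := (Finset.sum_eq_sum_iff_of_le hmono).1 e2 v1 hv1
      have hp1 : pl G S v1 = k := hplk _ hv hvlen v1 (by simp)
      rw [hp1] at e4
      simp only [Nat.choose_one_right] at e4
      obtain ⟨K, hKS, hKc, hvK, hKcard⟩ := ih2 e1 v1 hv1 (by omega)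
      have hvnK : v ∉ K := fun h => by simpa using hKS h
      have hP : PIn G S (v :: v1 :: (K.erase v1).toList) := by
        have hnd1 : (v1 :: (K.erase v1).toList).Nodup := by
          rw [List.nodup_cons]
          exact ⟨by simp, Finset.nodup_toList _⟩
        have hmem : ∀ x ∈ v1 :: (K.erase v1).toList, x ∈ K := by
          intro x hx
          rcases List.mem_cons.1 hx with rfl | hx
          · exact hvK
          · rw [Finset.mem_toList] at hx
            exact Finset.mem_of_mem_erase hx
        refine ⟨List.nodup_cons.2 ⟨fun h => hvnK (hmem v h), hnd1⟩, ?_, ?_⟩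
        · rw [List.isChain_cons]
          refine ⟨by simpa using hadj, chain_of_clique G hnd1 ?_⟩
          intro x hx y hy hxy
          exact hKc (hmem x hx) (hmem y hy) hxy
        · intro x hx
          rcases List.mem_cons.1 hx with rfl | hx
          · exact hvS
          · exact Finset.mem_of_mem_erase (hKS (hmem x hx))
      have h1 := hmax _ hP
      simp only [List.length_cons, Finset.length_toList, Finset.card_erase_of_mem hvK] at h1
      omega
  · set T := c.toFinset with hT
    have hTS : T ⊆ S := fun x hx => hc.2.2 x (List.mem_toFinset.1 hx)
    have hTc : T.card = k + 1 := by rw [hT, List.toFinset_card_of_nodup hc.1, hclen]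
    have hTne : T.Nonempty := by rw [← Finset.card_pos]; omega
    have hpT : ∀ x ∈ T, pl G S x = k := fun x hx => hplk c hc hclen x (List.mem_toFinset.1 hx)
    obtain ⟨ih1, ih2⟩ := ih (S \ T) (Finset.sdiff_ssubset hTS hTne)
    have hun := nc_union G S T r (closed_no_edge G S k c hc hclen hmax hcl)
    have hmono : ∀ u ∈ S \ T, (pl G (S \ T) u).choose r ≤ (pl G S u).choose r :=
      fun u hu => Nat.choose_le_choose _ (pl_mono G Finset.sdiff_subset hu)
    have hsum := Finset.sum_le_sum hmono
    have hS : ∑ u ∈ S, (pl G S u).choose r =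
        ∑ u ∈ S \ T, (pl G S u).choose r + (k + 1) * k.choose r := by
      rw [← Finset.sum_sdiff hTS]
      congr 1
      rw [Finset.sum_congr rfl (g := fun _ => k.choose r) (fun x hx => by rw [hpT x hx])]
      simp [hTc]
    have hbin : (k + 1) * k.choose r = (r + 1) * (k + 1).choose (r + 1) := by
      rw [Nat.add_one_mul_choose_eq, mul_comm]
    have hle := nc_le_choose G T (r+1)
    rw [hTc] at hle
    have hle2 := Nat.mul_le_mul_left (r+1) hle
    have hun2 := Nat.mul_le_mul_left (r+1) hun
    rw [mul_add] at hun2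
    rw [hS]
    refine ⟨by omega, ?_⟩
    intro heq u hu hur
    have e1 : (r+1) * nc G (S \ T) (r+1) = ∑ u ∈ S \ T, (pl G (S \ T) u).choose r := by
      omega
    have e2 : ∑ u ∈ S \ T, (pl G (S \ T) u).choose r = ∑ u ∈ S \ T, (pl G S u).choose r := by omega
    have e3 : (r+1) * nc G T (r+1) = (r+1) * (k+1).choose (r+1) := by omega
    by_cases huT : u ∈ T
    · have hrk : r ≤ k := hur.trans (hwmax u hu)
      refine ⟨T, hTS, clique_of_nc G T r hr (by omega) ?_, huT, by rw [hTc, hpT u huT]⟩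
      rw [hTc]
      exact Nat.eq_of_mul_eq_mul_left (Nat.succ_pos r) e3
    · have huST : u ∈ S \ T := Finset.mem_sdiff.2 ⟨hu, huT⟩
      have e4 := (Finset.sum_eq_sum_iff_of_le hmono).1 e2 u huST
      have e5 := choose_inj_of hr (pl_mono G Finset.sdiff_subset huST) hur e4
      obtain ⟨K, hK1, hK2, hK3, hK4⟩ := ih2 e1 u huST (by omega)
      exact ⟨K, hK1.trans Finset.sdiff_subset, hK2, hK3, by omega⟩
end mainlemma

section final
variable {V : Type*} [Fintype V] [DecidableEq V] (G : SimpleGraph V) [DecidableRel G.Adj]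

lemma mpl_bdd (e : Sym2 V) :
    BddAbove {n : ℕ | ∃ (u v : V) (w : G.Walk u v), w.IsPath ∧ e ∈ w.edges ∧ w.length = n} := by
  refine ⟨Fintype.card V, ?_⟩
  rintro n ⟨u, v, w, h1, h2, rfl⟩
  exact h1.length_lt.le

lemma walk_of_chain (l : List V) (x : V) (h : (x :: l).IsChain G.Adj) :
    ∃ (v : V) (w : G.Walk x v), w.support = x :: l :=
  ⟨_, Walk.ofSupport (x :: l) (List.cons_ne_nil x l) h,
    Walk.support_ofSupport (List.cons_ne_nil x l) h⟩

lemma mpl_ge (l1 l2 : List V) (x y : V) (hn : (l1 ++ x :: y :: l2).Nodup)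
    (hc : (l1 ++ x :: y :: l2).IsChain G.Adj) :
    (l1 ++ x :: y :: l2).length ≤ maxPathLen G s(x, y) + 1 := by
  have hc1 : (l1 ++ [x]).IsChain G.Adj := by
    have : l1 ++ x :: y :: l2 = (l1 ++ [x]) ++ (y :: l2) := by simp
    rw [this] at hc
    exact hc.left_of_append
  have hc2 := hc.right_of_append
  rw [List.isChain_cons] at hc2
  have hxy : G.Adj x y := hc2.1 y (by simp)
  have hc1' : (x :: l1.reverse).IsChain G.Adj := by
    have : x :: l1.reverse = (l1 ++ [x]).reverse := by simp
    rw [this, List.isChain_reverse]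
    exact hc1.imp (fun a b h => h.symm)
  obtain ⟨a, w1, hw1⟩ := walk_of_chain G _ _ hc1'
  obtain ⟨b, w2, hw2⟩ := walk_of_chain G _ _ hc2.2
  let w : G.Walk a b := w1.reverse.append (Walk.cons hxy w2)
  have hsup : w.support = l1 ++ x :: y :: l2 := by
    simp [w, Walk.support_append, hw1, hw2]
  have hlen : w.length + 1 = (l1 ++ x :: y :: l2).length := by
    rw [← hsup, Walk.length_support]
  rw [← hlen]
  refine Nat.succ_le_succ (le_csSup (mpl_bdd G _) ⟨a, b, w, ?_, ?_, rfl⟩)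
  · rw [Walk.isPath_def, hsup]; exact hn
  · simp [w, Walk.edges_append]

lemma exists_mpl (x y : V) (hxy : G.Adj x y) :
    ∃ (u v : V) (w : G.Walk u v), w.IsPath ∧ s(x, y) ∈ w.edges ∧
      w.length = maxPathLen G s(x, y) := by
  have : maxPathLen G s(x, y) ∈
    {n : ℕ | ∃ (u v : V) (w : G.Walk u v), w.IsPath ∧ s(x, y) ∈ w.edges ∧ w.length = n} := by
    refine Nat.sSup_mem ⟨1, x, y, Walk.cons hxy Walk.nil, ?_, by simp, by simp⟩ (mpl_bdd G _)
    simp [hxy.ne]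
  exact this

lemma clique_mpl (K : Finset V) (hK : G.IsClique (K : Set V)) (x y : V) (hx : x ∈ K) (hy : y ∈ K)
    (hxy : x ≠ y) : K.card ≤ maxPathLen G s(x, y) + 1 := by
  have hyx : y ∈ K.erase x := Finset.mem_erase.2 ⟨hxy.symm, hy⟩
  have hnd : (x :: y :: ((K.erase x).erase y).toList).Nodup := by
    simp [hxy, Finset.nodup_toList]
  have hmem : ∀ z ∈ x :: y :: ((K.erase x).erase y).toList, z ∈ K := by
    intro z hz
    simp only [List.mem_cons, Finset.mem_toList, Finset.mem_erase] at hz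
    rcases hz with rfl | rfl | hz
    · exact hx
    · exact hy
    · exact hz.2.2
  have := mpl_ge G [] ((K.erase x).erase y).toList x y (by simpa using hnd)
    (chain_of_clique G hnd (fun a ha b hb hab => hK (hmem a ha) (hmem b hb) hab))
  simp only [List.nil_append, List.length_cons, Finset.length_toList,
    Finset.card_erase_of_mem hyx, Finset.card_erase_of_mem hx] at this
  omega

lemma pl_nbr (u v : V) (huv : G.Adj v u) :
    pl G (univ.filter (G.Adj v)) u + 1 ≤ maxPathLen G s(v, u) := by
  obtain ⟨l, hl, hul, hlen⟩ := exists_pl G (S := univ.filter (G.Adj v)) (u := u) (by simpa using huv)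
  rw [← hlen]
  obtain ⟨l1, l2, rfl⟩ := List.append_of_mem hul
  obtain ⟨hnd, hch, hS⟩ := hl
  have hadj : ∀ x ∈ l1 ++ u :: l2, G.Adj v x := fun x hx => by simpa using hS x hx
  have hvn : v ∉ l1 ++ u :: l2 := fun h => G.loopless.irrefl v (hadj v h)
  have hperm : (l1 ++ u :: v :: l2).Perm (v :: (l1 ++ u :: l2)) := by
    have : l1 ++ u :: v :: l2 = (l1 ++ [u]) ++ v :: l2 := by simp
    rw [this]
    refine List.perm_middle.trans ?_
    simp
  have h1 := mpl_ge G l1 l2 u v (hperm.nodup_iff.2 (List.nodup_cons.2 ⟨hvn, hnd⟩)) (by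
    rw [List.isChain_append] at hch ⊢
    refine ⟨hch.1, ?_, ?_⟩
    · rw [List.isChain_cons, List.isChain_cons]
      refine ⟨by simpa using huv.symm, ?_, (List.isChain_cons.1 hch.2.1).2⟩
      intro y hy
      exact hadj y (by simp [List.mem_of_mem_head? hy])
    · simpa using hch.2.2)
  rw [hperm.length_eq, List.length_cons] at h1
  rw [Sym2.eq_swap]
  omega

lemma edge_sum (f : Sym2 V → ℕ) :
    ∑ v, ∑ u ∈ univ.filter (G.Adj v), f s(v, u) = 2 * ∑ e ∈ G.edgeFinset, f e := by
  have h1 : ∑ d : G.Dart, f d.edge = 2 * ∑ e ∈ G.edgeFinset, f e := by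
    rw [← Finset.sum_fiberwise_of_maps_to (s := univ) (t := G.edgeFinset)
      (g := fun d : G.Dart => d.edge) (fun d _ => by simpa using d.edge_mem), Finset.mul_sum]
    refine Finset.sum_congr rfl ?_
    intro e he
    rw [Finset.sum_congr rfl (g := fun _ => f e) (fun d hd => by rw [(Finset.mem_filter.1 hd).2])]
    rw [Finset.sum_const, G.dart_edge_fiber_card e (by simpa using he)]
    simp
  rw [← h1, Finset.sum_sigma']
  refine Finset.sum_bij' (fun p hp => ⟨(p.1, p.2), by simpa using hp⟩)
    (fun d _ => ⟨d.fst, d.snd⟩) ?_ ?_ ?_ ?_ ?_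
  · intros; simp
  · intro d _; simpa using d.adj
  · intros; rfl
  · intros; rfl
  · intros; rfl

lemma nc_univ (t : ℕ) : cliqueCount G t = nc G univ t := by
  classical
  unfold cliqueCount nc
  rw [← Set.ncard_coe_finset]
  congr 1
  ext K
  simp [isNClique_iff, and_comm]

lemma eq_conv (r N M : ℕ) :
    ((N : ℚ) = (1 / ((r+2).choose 2 : ℕ)) * (M : ℚ)) ↔ (r + 1) * ((r + 2) * N) = 2 * M := by
  have h : ((r+2).choose 2 : ℚ) = ((r:ℚ)+2) * (r+1) / 2 := by
    rw [Nat.cast_choose_two]; push_cast; ring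
  rw [h]
  have h2 : ((r:ℚ)+2) * (r+1) ≠ 0 := by positivity
  rw [← @Nat.cast_inj ℚ]
  push_cast
  constructor
  · intro h; rw [h]; field_simp
  · intro h
    field_simp
    linarith

lemma bad_edge (r : ℕ) (K : Finset V) (hK : G.IsClique (K : Set V)) (hc : K.card = r + 2)
    (x y : V) (hx : x ∈ K) (hy : y ∈ K) (hxy : x ≠ y) : r + 1 ≤ maxPathLen G s(x, y) := by
  have := clique_mpl G K hK x y hx hy hxy
  omega

theorem forward (r : ℕ) (hr : 1 ≤ r)
    (h : (r + 1) * ((r + 2) * nc G univ (r + 2)) =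
      2 * ∑ e ∈ G.edgeFinset, (maxPathLen G e - 1).choose r) (x y : V) (hxy : G.Adj x y)
    (hp : r + 1 ≤ maxPathLen G s(x, y)) :
    ∃ K : Finset V, G.IsClique (K : Set V) ∧ x ∈ K ∧ y ∈ K ∧ K.card = maxPathLen G s(x, y) + 1 := by
  rw [← edge_sum G (fun e => (maxPathLen G e - 1).choose r), nc_sum, Finset.mul_sum] at h
  have hm2 : ∀ v : V, ∀ u ∈ univ.filter (G.Adj v),
      (pl G (univ.filter (G.Adj v)) u).choose r ≤ (maxPathLen G s(v, u) - 1).choose r := by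
    intro v u hu
    have := pl_nbr G u v (by simpa using hu)
    exact Nat.choose_le_choose _ (by omega)
  have hm : ∀ v ∈ (univ : Finset V), (r + 1) * nc G (univ.filter (G.Adj v)) (r + 1) ≤
      ∑ u ∈ univ.filter (G.Adj v), (maxPathLen G s(v, u) - 1).choose r := by
    intro v _
    exact (main_local G r hr _).1.trans (Finset.sum_le_sum (hm2 v))
  have h1 := (Finset.sum_eq_sum_iff_of_le hm).1 h x (by simp)
  obtain ⟨m1, m2⟩ := main_local G r hr (univ.filter (G.Adj x))
  have m3 := Finset.sum_le_sum (hm2 x)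
  have h2 := (Finset.sum_eq_sum_iff_of_le (hm2 x)).1 (by omega) y (by simpa using hxy)
  have h3 := pl_nbr G y x hxy
  have h4 := choose_inj_of hr (by omega) (by omega) h2
  obtain ⟨K, hK1, hK2, hK3, hK4⟩ := m2 (by omega) y (by simpa using hxy) (by omega)
  have hxK : x ∉ K := fun h => by simpa using hK1 h
  refine ⟨insert x K, ?_, by simp, by simp [hK3], ?_⟩
  · rw [Finset.coe_insert]
    refine hK2.insert ?_
    intro b hb _
    simpa using hK1 hb
  · rw [Finset.card_insert_of_notMem hxK]
    omega

theorem forward_trans (r : ℕ) (hr : 1 ≤ r)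
    (h : (r + 1) * ((r + 2) * nc G univ (r + 2)) =
      2 * ∑ e ∈ G.edgeFinset, (maxPathLen G e - 1).choose r) (x y z : V) (hxy : G.Adj x y)
    (hp : r + 1 ≤ maxPathLen G s(x, y)) (hyz : G.Adj y z) (hxz : x ≠ z) :
    G.Adj x z ∧ r + 1 ≤ maxPathLen G s(x, z) := by
  obtain ⟨K, hK1, hK2, hK3, hK4⟩ := forward G r hr h x y hxy hp
  by_cases hz : z ∈ K
  · refine ⟨hK1 hK2 hz hxz, ?_⟩
    have := clique_mpl G K hK1 x z hK2 hz hxz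
    omega
  · exfalso
    have hyx : x ∈ K.erase y := Finset.mem_erase.2 ⟨hxy.ne, hK2⟩
    have hnd : (y :: x :: ((K.erase y).erase x).toList).Nodup := by
      simp [hxy.ne.symm, Finset.nodup_toList]
    have hmem : ∀ w ∈ y :: x :: ((K.erase y).erase x).toList, w ∈ K := by
      intro w hw
      simp only [List.mem_cons, Finset.mem_toList, Finset.mem_erase] at hw
      rcases hw with rfl | rfl | hw
      · exact hK3
      · exact hK2
      · exact hw.2.2
    have := mpl_ge G [z] ((K.erase y).erase x).toList y x
      (List.nodup_cons.2 ⟨fun h => hz (hmem z h), hnd⟩)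
      (by
        rw [List.singleton_append, List.isChain_cons]
        exact ⟨by simpa using hyz.symm,
          chain_of_clique G hnd (fun a ha b hb hab => hK1 (hmem a ha) (hmem b hb) hab)⟩)
    rw [Sym2.eq_swap] at this
    simp only [List.singleton_append, List.length_cons, Finset.length_toList,
      Finset.card_erase_of_mem hyx, Finset.card_erase_of_mem hK3] at this
    omega

theorem backward (r : ℕ) (D : SimpleGraph V)
    (hD : ∀ x y, D.Adj x y ↔ G.Adj x y ∧ r + 1 ≤ maxPathLen G s(x, y))
    (hcl : ∀ x y, D.Reachable x y → x = y ∨ D.Adj x y) (v u : V) (hvu : G.Adj v u) :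
    nc G ((univ.filter (G.Adj v)).filter (G.Adj u)) r = (maxPathLen G s(v, u) - 1).choose r := by
  classical
  have hins : ∀ K : Finset V, K ⊆ (univ.filter (G.Adj v)).filter (G.Adj u) → K.card = r →
      G.IsClique (K : Set V) → G.IsClique ((insert v (insert u K) : Finset V) : Set V) ∧
        (insert v (insert u K)).card = r + 2 := by
    intro K hKs hKc hK
    have hm : ∀ x ∈ K, G.Adj v x ∧ G.Adj u x := fun x hx => by simpa using hKs hx
    have hu : u ∉ K := fun h => G.loopless.irrefl u (hm u h).2
    have hv : v ∉ insert u K := by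
      rw [Finset.mem_insert]
      rintro (h | h)
      · exact hvu.ne h
      · exact G.loopless.irrefl v (hm v h).1
    refine ⟨?_, by rw [Finset.card_insert_of_notMem hv, Finset.card_insert_of_notMem hu, hKc]⟩
    rw [Finset.coe_insert, Finset.coe_insert]
    refine (hK.insert (fun b hb _ => (hm b hb).2)).insert ?_
    intro b hb _
    rcases hb with rfl | hb
    · exact hvu
    · exact (hm b hb).1
  by_cases hp : r + 1 ≤ maxPathLen G s(v, u)
  · set C : Finset V := univ.filter (fun x => x = v ∨ D.Adj v x) with hC
    have hDvu : D.Adj v u := (hD v u).2 ⟨hvu, hp⟩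
    have hvC : v ∈ C := by simp [hC]
    have huC : u ∈ C := by simp [hC, hDvu]
    have hreach : ∀ x ∈ C, D.Reachable v x := by
      intro x hx
      simp only [hC, mem_filter, mem_univ, true_and] at hx
      rcases hx with rfl | hx
      · exact Reachable.refl _
      · exact hx.reachable
    have hmemC : ∀ x, D.Reachable v x → x ∈ C := by
      intro x hx
      simp only [hC, mem_filter, mem_univ, true_and]
      rcases hcl v x hx with rfl | h
      · left; rfl
      · right; exact h
    have hCD : ∀ x ∈ C, ∀ y ∈ C, x ≠ y → G.Adj x y := by
      intro x hx y hy hxy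
      rcases hcl x y ((hreach x hx).symm.trans (hreach y hy)) with h | h
      · exact absurd h hxy
      · exact ((hD x y).1 h).1
    have hpC : maxPathLen G s(v, u) + 1 = C.card := by
      apply le_antisymm
      · obtain ⟨a, b, w, hw, he, hlen⟩ := exists_mpl G v u hvu
        rw [← hlen, ← Walk.length_support, ← List.toFinset_card_of_nodup hw.support_nodup]
        apply Finset.card_le_card
        have hwD : ∀ e ∈ w.edges, e ∈ D.edgeSet := by
          intro e he'
          induction e with
          | h x y =>
          rw [mem_edgeSet, hD]
          refine ⟨w.adj_of_mem_edges he', ?_⟩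
          have h1 : w.length ≤ maxPathLen G s(x, y) :=
            le_csSup (mpl_bdd G _) ⟨a, b, w, hw, he', rfl⟩
          omega
        have hva : v ∈ w.support := w.fst_mem_support_of_mem_edges he
        have hall : ∀ x ∈ w.support, D.Reachable a x := by
          intro x hx
          have hx' : x ∈ (w.transfer D hwD).support := by simpa using hx
          exact ⟨(w.transfer D hwD).takeUntil x hx'⟩
        intro x hx
        rw [List.mem_toFinset] at hx
        exact hmemC x ((hall v hva).symm.trans (hall x hx))
      · exact clique_mpl G C (fun x hx y hy hxy => hCD x hx y hy hxy) v u hvC huC hvu.ne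
    have hcard : ((C.erase v).erase u).card = maxPathLen G s(v, u) - 1 := by
      rw [Finset.card_erase_of_mem (Finset.mem_erase.2 ⟨hvu.ne.symm, huC⟩),
        Finset.card_erase_of_mem hvC]
      omega
    rw [← hcard, ← Finset.card_powersetCard]
    unfold nc
    congr 1
    ext K
    simp only [mem_filter, mem_powersetCard]
    constructor
    · rintro ⟨⟨h1, h2⟩, h3⟩
      refine ⟨?_, h2⟩
      obtain ⟨h4, h5⟩ := hins K h1 h2 h3
      intro x hx
      have hm : G.Adj v x ∧ G.Adj u x := by simpa using h1 hx
      have h6 := bad_edge G r _ h4 h5 v x (by simp) (by simp [hx]) hm.1.ne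
      rw [Finset.mem_erase, Finset.mem_erase]
      exact ⟨hm.2.ne.symm, hm.1.ne.symm, hmemC x ((hD v x).2 ⟨hm.1, h6⟩).reachable⟩
    · rintro ⟨h1, h2⟩
      have hm : ∀ x ∈ K, x ≠ u ∧ x ≠ v ∧ x ∈ C := fun x hx => by
        have := h1 hx
        rwa [Finset.mem_erase, Finset.mem_erase] at this
      refine ⟨⟨?_, h2⟩, ?_⟩
      · intro x hx
        obtain ⟨h3, h4, h5⟩ := hm x hx
        simp only [mem_filter, mem_univ, true_and]
        exact ⟨hCD v hvC x h5 h4.symm, hCD u huC x h5 h3.symm⟩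
      · intro x hx y hy hxy
        exact hCD x (hm x hx).2.2 y (hm y hy).2.2 hxy
  · have hmpos : 1 ≤ maxPathLen G s(v, u) := by
      have := clique_mpl G {v, u} (by
        rw [Finset.coe_pair, isClique_pair]; exact fun _ => hvu) v u (by simp) (by simp) hvu.ne
      rw [Finset.card_pair hvu.ne] at this
      omega
    rw [Nat.choose_eq_zero_of_lt (by omega)]
    unfold nc
    rw [Finset.card_eq_zero, Finset.filter_eq_empty_iff]
    intro K hK hKc
    rw [mem_powersetCard] at hK
    obtain ⟨h4, h5⟩ := hins K hK.1 hK.2 hKc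
    exact hp (bad_edge G r _ h4 h5 v u (by simp) (by simp) hvu.ne)

end final

theorem stmt_4 {V : Type*} [Fintype V] [DecidableEq V] (G : SimpleGraph V)
    [DecidableRel G.Adj] (t : ℕ) (ht : 3 ≤ t) :
    (cliqueCount G t : ℚ) =
        (1 / (t.choose 2)) * ∑ e ∈ G.edgeFinset, ((maxPathLen G e - 1).choose (t - 2) : ℚ) ↔
      ∀ u v : V,
        (G.deleteEdges {e | e ∈ G.edgeSet ∧ maxPathLen G e < t - 1}).Reachable u v →
          u = v ∨ (G.deleteEdges {e | e ∈ G.edgeSet ∧ maxPathLen G e < t - 1}).Adj u v := by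
  obtain ⟨r, rfl⟩ : ∃ r, t = r + 2 := ⟨t - 2, by omega⟩
  have hr : 1 ≤ r := by omega
  set D := G.deleteEdges {e | e ∈ G.edgeSet ∧ maxPathLen G e < r + 2 - 1} with hDdef
  have hD : ∀ x y, D.Adj x y ↔ G.Adj x y ∧ r + 1 ≤ maxPathLen G s(x, y) := by
    intro x y
    simp only [hDdef, deleteEdges_adj, Set.mem_ofPred_eq, mem_edgeSet]
    constructor
    · rintro ⟨h1, h2⟩
      exact ⟨h1, by by_contra h3; exact h2 ⟨h1, by omega⟩⟩
    · rintro ⟨h1, h2⟩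
      exact ⟨h1, fun h3 => by omega⟩
  rw [show r + 2 - 2 = r by omega, ← Nat.cast_sum, eq_conv, nc_univ]
  constructor
  · intro h u v ⟨w⟩
    induction w with
    | nil => left; rfl
    | @cons a b c hab p ih =>
      rcases ih with rfl | hbc
      · right; exact hab
      · by_cases hac : a = c
        · left; exact hac
        · right
          rw [hD] at hab hbc ⊢
          exact forward_trans G r hr h a b c hab.1 hab.2 hbc.1 hac
  · intro hcl
    rw [← edge_sum G (fun e => (maxPathLen G e - 1).choose r), nc_sum, Finset.mul_sum]
    refine Finset.sum_congr rfl (fun v _ => ?_)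
    rw [nc_sum]
    refine Finset.sum_congr rfl (fun u hu => ?_)
    exact backward G r D hD hcl v u (by simpa using hu)
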